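/- For each integer m ≥ 3, there exists a connected graph G of order m such that χ_la(G ∨ O_2) − χ_la(G) = 3 − m ≤ 0; in particular, the star K(1, m−1) satisfies χ_la(K(1,m−1)) = m and χ_la(K(1,m−1) ∨ O_2) = 3. -/

import Mathlib

open scoped BigOperators

/-- The induced vertex sum: sum of labels of edges incident to `v`. -/
noncomputable def vertexSum {V : Type*} (G : SimpleGraph V) (f : Sym2 V → ℕ) (v : V) : ℕ :=
  ∑ᶠ e ∈ G.incidenceSet v, f e

/-- `f` is a local antimagic labeling of `G`: a bijection from the edge set onto
`{1, …, |E(G)|}` such that adjacent vertices get distinct induced sums. -/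
def IsLocalAntimagic {V : Type*} (G : SimpleGraph V) (f : Sym2 V → ℕ) : Prop :=
  Set.BijOn f G.edgeSet (Set.Icc 1 G.edgeSet.ncard) ∧
  ∀ u v, G.Adj u v → vertexSum G f u ≠ vertexSum G f v

/-- Number of distinct induced vertex labels of the labeling `f`. -/
noncomputable def colorCount {V : Type*} (G : SimpleGraph V) (f : Sym2 V → ℕ) : ℕ :=
  (Set.range (vertexSum G f)).ncard

/-- The local antimagic chromatic number. -/
noncomputable def chiLA {V : Type*} (G : SimpleGraph V) : ℕ :=
  sInf { n | ∃ f, IsLocalAntimagic G f ∧ colorCount G f = n }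

/-- The join `G ∨ Oₙ` of `G` with the empty graph on `n` vertices. -/
def joinEmpty {V : Type*} (G : SimpleGraph V) (n : ℕ) : SimpleGraph (V ⊕ Fin n) :=
  SimpleGraph.fromRel (fun x y =>
    (∃ a b, x = Sum.inl a ∧ y = Sum.inl b ∧ G.Adj a b) ∨ (x.isLeft ∧ y.isRight))

/-- Existence of a suitable `3 × k` array of labels together with two extra labels `p, q`. -/
def GoodArr (k : ℕ) : Prop :=
  ∃ (x : Fin k → Fin 3 → ℕ) (p q T U W : ℕ),
    (∀ i r i' r', x i r = x i' r' → i = i' ∧ r = r') ∧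
    (∀ i r, 1 ≤ x i r ∧ x i r ≤ 3 * k + 2 ∧ x i r ≠ p ∧ x i r ≠ q) ∧
    p ≠ q ∧ 1 ≤ p ∧ p ≤ 3 * k + 2 ∧ 1 ≤ q ∧ q ≤ 3 * k + 2 ∧
    (∀ i, x i 0 + x i 1 + x i 2 = T) ∧
    (∑ i, x i 0) + p = U ∧ (∑ i, x i 1) + q = U ∧ (∑ i, x i 2) + p + q = W ∧
    T ≠ U ∧ T ≠ W ∧ U ≠ W

lemma goodArr_two : GoodArr 2 := by
  refine ⟨![![3, 4, 8], ![7, 2, 6]], 1, 5, 15, 11, 20, ?_⟩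
  decide

lemma goodArr_three : GoodArr 3 := by
  refine ⟨![![3, 7, 11], ![6, 5, 10], ![8, 4, 9]], 1, 2, 21, 18, 33, ?_⟩
  decide

/-- even-type base column -/
def bev (t off j : ℕ) : Fin 3 → ℕ :=
  ![off + 2 * j, off + (2 * t + 1) + (t - j), off + 2 * (2 * t + 1) + (2 * t - j)]

/-- odd-type base column -/
def bod (t off j : ℕ) : Fin 3 → ℕ :=
  ![off + 2 * j + 1, off + (2 * t + 1) + (2 * t - j), off + 2 * (2 * t + 1) + (t - 1 - j)]

lemma bev_bev {t off j j' : ℕ} {r r' : Fin 3} (h : j ≤ t) (h' : j' ≤ t)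
    (e : bev t off j r = bev t off j' r') : j = j' ∧ r = r' := by
  fin_cases r <;> fin_cases r' <;> simp [bev] at e ⊢ <;> omega

lemma bod_bod {t off j j' : ℕ} {r r' : Fin 3} (h : j < t) (h' : j' < t)
    (e : bod t off j r = bod t off j' r') : j = j' ∧ r = r' := by
  fin_cases r <;> fin_cases r' <;> simp [bod] at e ⊢ <;> omega

lemma bev_bod {t off j j' : ℕ} {r r' : Fin 3} (h : j ≤ t) (h' : j' < t)
    (e : bev t off j r = bod t off j' r') : False := by
  fin_cases r <;> fin_cases r' <;> simp [bev, bod] at e <;> omega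

lemma sum_fin3_perm (b : Fin 3 → ℕ) (π : Fin 3 → Fin 3) (h : Function.Injective π) :
    b (π 0) + b (π 1) + b (π 2) = b 0 + b 1 + b 2 := by
  have := Function.Bijective.sum_comp (Finite.injective_iff_bijective.mp h) b
  simpa [Fin.sum_univ_three] using this

lemma good_core (t n off δ p q : ℕ) (hδ : n + δ = t + 1)
    (hcase : (off = 3 ∧ δ = 0 ∧ p = 1 ∧ q = 2) ∨ (off = 1 ∧ δ = 1 ∧ p = 1 ∧ q = 3 * t + 2))
    (πe πo : ℕ → Fin 3 → Fin 3) (he : ∀ j, Function.Injective (πe j))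
    (ho : ∀ j, Function.Injective (πo j)) (c : ℤ)
    (hd : ∑ j ∈ Finset.range n, ((bev t off (j + δ) (πe j 0) : ℤ) - bev t off (j + δ) (πe j 1)) +
      ∑ j ∈ Finset.range t, ((bod t off j (πo j 0) : ℤ) - bod t off j (πo j 1)) = q - p)
    (hc : ∑ j ∈ Finset.range n, (bev t off (j + δ) (πe j 2) : ℤ) +
      ∑ j ∈ Finset.range t, (bod t off j (πo j 2) : ℤ) = c)
    (h1 : 2 * (3 * off + 9 * t + 3 : ℤ) ≠ (n + t) * (3 * off + 9 * t + 3) - c + p + q)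
    (h2 : (3 * off + 9 * t + 3 : ℤ) ≠ c + p + q)
    (h3 : 2 * (c + p + q) ≠ (n + t) * (3 * off + 9 * t + 3) - c + p + q) :
    GoodArr (n + t) := by
  let X : Fin n ⊕ Fin t → Fin 3 → ℕ := Sum.elim
    (fun j r => bev t off (j + δ) (πe j r)) (fun j r => bod t off j (πo j r))
  let e : Fin (n + t) ≃ Fin n ⊕ Fin t := finSumFinEquiv.symm
  have hsum : ∀ r, ∑ i, X (e i) r = ∑ j ∈ Finset.range n, bev t off (j + δ) (πe j r) +
      ∑ j ∈ Finset.range t, bod t off j (πo j r) := by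
    intro r
    rw [Equiv.sum_comp e (fun i => X i r), Fintype.sum_sum_type, Finset.sum_range, Finset.sum_range]
    rfl
  have hT : ∀ i, X i 0 + X i 1 + X i 2 = 3 * off + 9 * t + 3 := by
    rintro (j | j)
    · have := j.2
      have h := sum_fin3_perm (bev t off (j + δ)) _ (he j)
      simp only [X, Sum.elim_inl]
      rw [h]
      simp [bev]
      omega
    · have := j.2
      have h := sum_fin3_perm (bod t off j) _ (ho j)
      simp only [X, Sum.elim_inr]
      rw [h]
      simp [bod]
      omega
  have htot : (∑ i, X (e i) 0) + (∑ i, X (e i) 1) + (∑ i, X (e i) 2)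
      = (n + t) * (3 * off + 9 * t + 3) := by
    rw [← Finset.sum_add_distrib, ← Finset.sum_add_distrib]
    simp [hT]
  have hd' : ((∑ i, X (e i) 0 : ℕ) : ℤ) - (∑ i, X (e i) 1 : ℕ) = q - p := by
    rw [hsum, hsum, ← hd]
    push_cast
    rw [Finset.sum_sub_distrib, Finset.sum_sub_distrib]
    ring
  have hc' : ((∑ i, X (e i) 2 : ℕ) : ℤ) = c := by
    rw [hsum, ← hc]
    push_cast
    rfl
  have htot' : ((∑ i, X (e i) 0 : ℕ) : ℤ) + (∑ i, X (e i) 1 : ℕ) + (∑ i, X (e i) 2 : ℕ)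
      = (n + t) * (3 * off + 9 * t + 3) := by exact_mod_cast htot
  refine ⟨fun i => X (e i), p, q, 3 * off + 9 * t + 3, (∑ i, X (e i) 0) + p,
    (∑ i, X (e i) 2) + p + q, ?_, ?_, ?_, ?_, ?_, ?_, ?_, fun i => hT _, rfl, ?_, rfl, ?_, ?_, ?_⟩
  · intro i r i' r'
    have key : ∀ a b, X a r = X b r' → a = b ∧ r = r' := by
      rintro (j | j) (j' | j') h <;> simp only [X, Sum.elim_inl, Sum.elim_inr] at h <;>
        have h5 := j.2 <;> have h6 := j'.2
      · obtain ⟨h7, h8⟩ := bev_bev (by omega) (by omega) h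
        have h9 : j = j' := Fin.ext (by omega)
        subst h9
        exact ⟨rfl, he _ h8⟩
      · exact (bev_bod (by omega) (by omega) h).elim
      · exact (bev_bod (by omega) (by omega) h.symm).elim
      · obtain ⟨h7, h8⟩ := bod_bod (by omega) (by omega) h
        have h9 : j = j' := Fin.ext (by omega)
        subst h9
        exact ⟨rfl, ho _ h8⟩
    intro h
    obtain ⟨h1, h2⟩ := key _ _ h
    exact ⟨e.injective h1, h2⟩
  · intro i r
    have key : ∀ a, 1 ≤ X a r ∧ X a r ≤ 3 * (n + t) + 2 ∧ X a r ≠ p ∧ X a r ≠ q := by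
      rintro (j | j) <;> simp only [X, Sum.elim_inl, Sum.elim_inr] <;> have h5 := j.2
      · generalize πe j r = s
        fin_cases s <;> simp [bev] <;> omega
      · generalize πo j r = s
        fin_cases s <;> simp [bod] <;> omega
    exact key _
  · omega
  · omega
  · omega
  · omega
  · omega
  · change (∑ i, X (e i) 1) + q = (∑ i, X (e i) 0) + p
    omega
  · intro h
    apply h1
    have : (3 * off + 9 * t + 3 : ℤ) = (∑ i, X (e i) 0 : ℕ) + p := by exact_mod_cast h
    linarith
  · intro h
    apply h2
    have : (3 * off + 9 * t + 3 : ℤ) = (∑ i, X (e i) 2 : ℕ) + p + q := by exact_mod_cast h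
    linarith
  · intro h
    apply h3
    have : ((∑ i, X (e i) 0 : ℕ) + p : ℤ) = (∑ i, X (e i) 2 : ℕ) + p + q := by exact_mod_cast h
    linarith

lemma sum_two (a b : ℕ) (u v w : ℤ) (g : ℕ → ℤ)
    (h1 : ∀ j < a, g j = u + 2 * w * j) (h2 : ∀ j, a ≤ j → j < a + b → g j = v + 2 * w * j) :
    ∑ j ∈ Finset.range (a + b), g j = a * u + b * v + w * ((a + b) * (a + b - 1)) := by
  have h0 : ∀ a' ≤ a, ∑ j ∈ Finset.range a', g j = a' * u + w * (a' * (a' - 1)) := by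
    intro a' 
    induction a' with
    | zero => simp
    | succ m ih =>
      intro hm
      rw [Finset.sum_range_succ, ih (by omega), h1 m (by omega)]
      push_cast
      ring
  induction b with
  | zero => rw [Nat.add_zero, h0 a le_rfl]; simp
  | succ m ih =>
    rw [← Nat.add_assoc, Finset.sum_range_succ, ih (fun j h h' => h2 j h (by omega)),
      h2 _ (by omega) (by omega)]
    push_cast
    ring


lemma sum_end (N a b : ℕ) (hN : N = a + b + 1) (u v w z : ℤ) (g : ℕ → ℤ)
    (h1 : ∀ j < a, g j = u + 2 * w * j) (h2 : ∀ j, a ≤ j → j < a + b → g j = v + 2 * w * j)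
    (h3 : g (a + b) = z) :
    ∑ j ∈ Finset.range N, g j = a * u + b * v + w * ((a + b) * (a + b - 1)) + z := by
  rw [hN, Finset.sum_range_succ, sum_two a b u v w g h1 h2, h3]

lemma sum_start (N a b : ℕ) (hN : N = a + b + 1) (u v w z : ℤ) (g : ℕ → ℤ)
    (h1 : ∀ j < a, g (j + 1) = u + 2 * w * j)
    (h2 : ∀ j, a ≤ j → j < a + b → g (j + 1) = v + 2 * w * j)
    (h3 : g 0 = z) :
    ∑ j ∈ Finset.range N, g j = a * u + b * v + w * ((a + b) * (a + b - 1)) + z := by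
  rw [hN, Finset.sum_range_succ', sum_two a b u v w _ h1 h2, h3]

lemma sum_start2 (N a b : ℕ) (hN : N = a + b + 2) (u v w y z : ℤ) (g : ℕ → ℤ)
    (h1 : ∀ j < a, g (j + 2) = u + 2 * w * j)
    (h2 : ∀ j, a ≤ j → j < a + b → g (j + 2) = v + 2 * w * j)
    (h3 : g 0 = z) (h4 : g 1 = y) :
    ∑ j ∈ Finset.range N, g j = a * u + b * v + w * ((a + b) * (a + b - 1)) + y + z := by
  rw [hN, Finset.sum_range_succ', sum_start (a + b + 1) a b rfl u v w y (fun j => g (j + 1)) h1 h2 h4, h3]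

lemma goodArr_1 (s : ℕ) (hs : 1 ≤ s) : GoodArr (s + s + 1 + (s + s)) := by
  refine good_core (s + s) (s + s + 1) 3 0 1 2 (by omega) (by simp)
    (fun j => if j < s then ![2, 1, 0] else if j < s + s then ![1, 2, 0] else ![1, 0, 2])
    (fun j => if j < s then ![2, 1, 0] else ![1, 2, 0])
    (by intro j; split_ifs <;> decide) (by intro j; split_ifs <;> decide)
    (8 * s ^ 2 + 20 * s + 5) ?_ ?_ ?_ ?_ ?_
  · rw [sum_end _ s s rfl (6 * s + 1) (-(6 * s + 1)) 0 1, sum_two s s (2 * s) (-(2 * s)) 0]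
    · push_cast; ring
    all_goals
      intros
      dsimp only [bev, bod]
      split_ifs <;> first | (exfalso; omega) | (simp <;> omega)
  · rw [sum_end _ s s rfl 3 3 1 (10 * s + 5), sum_two s s 4 4 1]
    · push_cast; ring
    all_goals
      intros
      dsimp only [bev, bod]
      split_ifs <;> first | (exfalso; omega) | (simp <;> omega)
  · push_cast; intro h; nlinarith
  · push_cast; intro h; nlinarith
  · push_cast; intro h; nlinarith

lemma goodArr_2 (r : ℕ) : GoodArr (2 * r + 4 + (2 * r + 3)) := by
  refine good_core (2 * r + 3) (2 * r + 4) 3 0 1 2 (by omega) (by simp)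
    (fun j => if j = 0 then ![2, 0, 1] else if j < r + 2 then ![2, 1, 0] else ![1, 2, 0])
    (fun j => if j = 0 then ![0, 2, 1] else if j < r + 3 then ![2, 1, 0] else ![1, 2, 0])
    (by intro j; split_ifs <;> decide) (by intro j; split_ifs <;> decide)
    (8 * r ^ 2 + 52 * r + 64) ?_ ?_ ?_ ?_ ?_
  · rw [sum_start _ (r + 1) (r + 2) (by omega) (6 * r + 10) (-(6 * r + 10)) 0 (12 * r + 20),
      sum_start _ (r + 2) r (by omega) (2 * r + 3) (-(2 * r + 3)) 0 (-(10 * r + 15))]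
    · push_cast; ring
    all_goals
      intros
      dsimp only [bev, bod]
      split_ifs <;> first | (exfalso; omega) | (simp <;> omega)
  · rw [sum_start _ (r + 1) (r + 2) (by omega) 5 5 1 (6 * r + 13),
      sum_start _ (r + 2) r (by omega) 6 6 1 (8 * r + 16)]
    · push_cast; ring
    all_goals
      intros
      dsimp only [bev, bod]
      split_ifs <;> first | (exfalso; omega) | (simp <;> omega)
  · push_cast; intro h; nlinarith
  · push_cast; intro h; nlinarith
  · push_cast; intro h; nlinarith

lemma goodArr_3 (r : ℕ) : GoodArr (2 * r + 3 + (2 * r + 3)) := by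
  refine good_core (2 * r + 3) (2 * r + 3) 1 1 1 (6 * r + 11) (by omega) (by omega)
    (fun j => if j = 0 then ![0, 1, 2] else if j = 1 then ![1, 0, 2] else
      if j < r + 3 then ![2, 1, 0] else ![1, 2, 0])
    (fun j => if j < r then ![2, 1, 0] else if j < 2 * r + 2 then ![1, 2, 0] else ![2, 0, 1])
    (by intro j; split_ifs <;> decide) (by intro j; split_ifs <;> decide)
    (8 * r ^ 2 + 56 * r + 64) ?_ ?_ ?_ ?_ ?_
  · rw [sum_start2 _ (r + 1) r (by omega) (6 * r + 10) (-(6 * r + 10)) 0 (6 * r + 4) (-(6 * r + 7)),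
      sum_end _ r (r + 2) (by omega) (2 * r + 3) (-(2 * r + 3)) 0 (4 * r + 9)]
    · push_cast; ring
    all_goals
      intros
      dsimp only [bev, bod]
      split_ifs <;> first | (exfalso; omega) | (simp <;> omega)
  · rw [sum_start2 _ (r + 1) r (by omega) 7 7 1 (12 * r + 19) (12 * r + 20),
      sum_end _ r (r + 2) (by omega) 2 2 1 (6 * r + 12)]
    · push_cast; ring
    all_goals
      intros
      dsimp only [bev, bod]
      split_ifs <;> first | (exfalso; omega) | (simp <;> omega)
  · push_cast; intro h; nlinarith
  · push_cast; intro h; nlinarith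
  · push_cast; intro h
    rcases Nat.eq_zero_or_pos r with h0 | h0
    · subst h0; norm_num at h
    · have h1 : (1 : ℤ) ≤ r := by exact_mod_cast h0
      nlinarith

lemma goodArr_4 (r : ℕ) : GoodArr (2 * r + 2 + (2 * r + 2)) := by
  refine good_core (2 * r + 2) (2 * r + 2) 1 1 1 (6 * r + 8) (by omega) (by omega)
    (fun j => if j = 0 then ![2, 0, 1] else if j < r + 1 then ![2, 1, 0] else ![1, 2, 0])
    (fun j => if j = 0 then ![1, 0, 2] else if j = 1 then ![0, 1, 2] else
      if j < r + 2 then ![2, 1, 0] else ![1, 2, 0])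
    (by intro j; split_ifs <;> decide) (by intro j; split_ifs <;> decide)
    (8 * r ^ 2 + 48 * r + 35) ?_ ?_ ?_ ?_ ?_
  · rw [sum_start _ r (r + 1) (by omega) (6 * r + 7) (-(6 * r + 7)) 0 (12 * r + 11),
      sum_start2 _ r r (by omega) (2 * r + 2) (-(2 * r + 2)) 0 (-(8 * r + 5)) (8 * r + 8)]
    · push_cast; ring
    all_goals
      intros
      dsimp only [bev, bod]
      split_ifs <;> first | (exfalso; omega) | (simp <;> omega)
  · rw [sum_start _ r (r + 1) (by omega) 5 5 1 (6 * r + 7),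
      sum_start2 _ r r (by omega) 6 6 1 (10 * r + 11) (10 * r + 12)]
    · push_cast; ring
    all_goals
      intros
      dsimp only [bev, bod]
      split_ifs <;> first | (exfalso; omega) | (simp <;> omega)
  · push_cast; intro h; nlinarith
  · push_cast; intro h
    have h' : 8 * r ^ 2 + 36 * r + 20 = 0 := by zify; nlinarith
    omega
  · push_cast; intro h
    rcases Nat.eq_zero_or_pos r with h0 | h0
    · subst h0; norm_num at h
    · have h1 : (1 : ℤ) ≤ r := by exact_mod_cast h0
      nlinarith

lemma goodArr_all (k : ℕ) (hk : 2 ≤ k) : GoodArr k := by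
  have h4 : k % 4 = 0 ∨ k % 4 = 1 ∨ k % 4 = 2 ∨ k % 4 = 3 := by omega
  rcases h4 with h | h | h | h
  · have := goodArr_4 (k / 4 - 1)
    rwa [show 2 * (k / 4 - 1) + 2 + (2 * (k / 4 - 1) + 2) = k by omega] at this
  · have := goodArr_1 (k / 4) (by omega)
    rwa [show k / 4 + k / 4 + 1 + (k / 4 + k / 4) = k by omega] at this
  · by_cases h2 : k = 2
    · subst h2; exact goodArr_two
    have := goodArr_3 (k / 4 - 1)
    rwa [show 2 * (k / 4 - 1) + 3 + (2 * (k / 4 - 1) + 3) = k by omega] at this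
  · by_cases h2 : k = 3
    · subst h2; exact goodArr_three
    have := goodArr_2 (k / 4 - 1)
    rwa [show 2 * (k / 4 - 1) + 4 + (2 * (k / 4 - 1) + 3) = k by omega] at this

/-- Vertex sum as a sum over neighbours. -/
lemma vertexSum_eq {V : Type*} [Fintype V] (G : SimpleGraph V) [DecidableRel G.Adj]
    (f : Sym2 V → ℕ) (v : V) :
    vertexSum G f v = ∑ w, if G.Adj v w then f s(v, w) else 0 := by
  classical
  unfold vertexSum
  have h : G.incidenceSet v = (fun w => s(v, w)) '' {w | G.Adj v w} := by
    ext e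
    induction e using Sym2.ind with
    | _ x y =>
      simp only [SimpleGraph.mk'_mem_incidenceSet_iff, Set.mem_image, Set.mem_ofPred_eq]
      constructor
      · rintro ⟨h, rfl | rfl⟩
        · exact ⟨y, h, rfl⟩
        · exact ⟨x, h.symm, Sym2.eq_swap⟩
      · rintro ⟨w, h, e⟩
        rw [Sym2.eq_iff] at e
        rcases e with ⟨rfl, rfl⟩ | ⟨rfl, rfl⟩
        · exact ⟨h, Or.inl rfl⟩
        · exact ⟨h.symm, Or.inr rfl⟩
  rw [h, finsum_mem_image (fun a _ b _ hab => Sym2.congr_right.mp hab),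
    ← Finset.sum_filter, ← finsum_mem_coe_finset]
  simp

lemma vertexSum_iso {V W : Type*} {G : SimpleGraph V} {H : SimpleGraph W} (φ : G ≃g H)
    (f : Sym2 W → ℕ) (v : V) :
    vertexSum G (fun e => f (Sym2.map φ e)) v = vertexSum H f (φ v) := by
  unfold vertexSum
  have h : H.incidenceSet (φ v) = Sym2.map φ '' G.incidenceSet v := by
    ext e
    constructor
    · intro he
      refine ⟨Sym2.map φ.symm e, ?_, ?_⟩
      · induction e using Sym2.ind with
        | _ x y =>
          rw [SimpleGraph.mk'_mem_incidenceSet_iff] at he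
          rw [Sym2.map_mk, SimpleGraph.mk'_mem_incidenceSet_iff]
          refine ⟨φ.symm.map_adj_iff.mpr he.1, ?_⟩
          rcases he.2 with h | h
          · left; rw [← h]; simp
          · right; rw [← h]; simp
      · induction e using Sym2.ind with
        | _ x y => simp
    · rintro ⟨e, he, rfl⟩
      induction e using Sym2.ind with
      | _ x y =>
        rw [SimpleGraph.mk'_mem_incidenceSet_iff] at he
        rw [Sym2.map_mk, SimpleGraph.mk'_mem_incidenceSet_iff]
        refine ⟨φ.map_adj_iff.mpr he.1, ?_⟩
        rcases he.2 with h | h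
        · left; rw [h]
        · right; rw [h]
  rw [h, finsum_mem_image (Sym2.map.injective φ.injective).injOn]

lemma edgeSet_iso {V W : Type*} {G : SimpleGraph V} {H : SimpleGraph W} (φ : G ≃g H) :
    Set.BijOn (Sym2.map φ) G.edgeSet H.edgeSet := by
  refine ⟨?_, (Sym2.map.injective φ.injective).injOn, ?_⟩
  · intro e
    induction e using Sym2.ind with
    | _ x y => intro h; exact φ.map_adj_iff.mpr h
  · intro e
    induction e using Sym2.ind with
    | _ x y =>
      intro h
      refine ⟨s(φ.symm x, φ.symm y), φ.symm.map_adj_iff.mpr h, ?_⟩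
      simp

lemma chiLA_set_iso {V W : Type*} {G : SimpleGraph V} {H : SimpleGraph W} (φ : G ≃g H) (n : ℕ)
    (h : ∃ f, IsLocalAntimagic H f ∧ colorCount H f = n) :
    ∃ f, IsLocalAntimagic G f ∧ colorCount G f = n := by
  obtain ⟨f, ⟨h1, h2⟩, h3⟩ := h
  refine ⟨fun e => f (Sym2.map φ e), ⟨?_, ?_⟩, ?_⟩
  · have hb := edgeSet_iso φ
    have hn : G.edgeSet.ncard = H.edgeSet.ncard := by
      rw [← hb.image_eq, hb.injOn.ncard_image]
    rw [hn]
    exact h1.comp hb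
  · intro u v huv
    rw [vertexSum_iso, vertexSum_iso]
    exact h2 _ _ (φ.map_adj_iff.mpr huv)
  · rw [← h3]
    unfold colorCount
    congr 1
    have : vertexSum G (fun e => f (Sym2.map φ e)) = vertexSum H f ∘ φ := by
      ext v; exact vertexSum_iso φ f v
    rw [this]
    exact φ.surjective.range_comp _

lemma chiLA_iso {V W : Type*} {G : SimpleGraph V} {H : SimpleGraph W} (φ : G ≃g H) :
    chiLA G = chiLA H := by
  unfold chiLA
  congr 1
  ext n
  exact ⟨chiLA_set_iso φ.symm n, chiLA_set_iso φ n⟩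

lemma joinEmpty_adj_ll {V : Type*} (G : SimpleGraph V) (n : ℕ) (a b : V) :
    (joinEmpty G n).Adj (Sum.inl a) (Sum.inl b) ↔ G.Adj a b := by
  simp only [joinEmpty, SimpleGraph.fromRel_adj]
  constructor
  · rintro ⟨_, (⟨x, y, hx, hy, h⟩ | h) | (⟨x, y, hx, hy, h⟩ | h)⟩
    · simp_all
    · simp at h
    · have := h.symm; simp_all
    · simp at h
  · intro h
    exact ⟨by simpa using h.ne, Or.inl (Or.inl ⟨a, b, rfl, rfl, h⟩)⟩

lemma joinEmpty_adj_lr {V : Type*} (G : SimpleGraph V) (n : ℕ) (a : V) (b : Fin n) :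
    (joinEmpty G n).Adj (Sum.inl a) (Sum.inr b) := by
  simp [joinEmpty, SimpleGraph.fromRel_adj]

lemma joinEmpty_adj_rl {V : Type*} (G : SimpleGraph V) (n : ℕ) (a : V) (b : Fin n) :
    (joinEmpty G n).Adj (Sum.inr b) (Sum.inl a) := (joinEmpty_adj_lr G n a b).symm

lemma joinEmpty_adj_rr {V : Type*} (G : SimpleGraph V) (n : ℕ) (a b : Fin n) :
    ¬ (joinEmpty G n).Adj (Sum.inr a) (Sum.inr b) := by
  simp [joinEmpty, SimpleGraph.fromRel_adj]

/-- Join respects isomorphism. -/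
def joinIso {V W : Type*} {G : SimpleGraph V} {H : SimpleGraph W} (φ : G ≃g H) (n : ℕ) :
    joinEmpty G n ≃g joinEmpty H n where
  toEquiv := Equiv.sumCongr φ.toEquiv (Equiv.refl _)
  map_rel_iff' := by
    rintro (a | a) (b | b)
    · simp only [Equiv.sumCongr_apply, Sum.map_inl, joinEmpty_adj_ll]
      exact φ.map_adj_iff
    · simp [joinEmpty_adj_lr]
    · simp [joinEmpty_adj_rl]
    · simp [joinEmpty_adj_rr]

lemma chiLA_eq_of {V : Type*} (G : SimpleGraph V) (n : ℕ)
    (h1 : ∃ f, IsLocalAntimagic G f ∧ colorCount G f = n)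
    (h2 : ∀ f, IsLocalAntimagic G f → n ≤ colorCount G f) : chiLA G = n := by
  apply le_antisymm
  · exact Nat.sInf_le h1
  · apply le_csInf ⟨n, h1⟩
    rintro b ⟨f, hf, rfl⟩
    exact h2 f hf

/-- A labelling is bijective if it is so on a parametrisation of the edges. -/
lemma bijOn_of_param {V E : Type*} [Fintype E] (G : SimpleGraph V) (f : Sym2 V → ℕ)
    (φ : E → Sym2 V) (hφ : Set.range φ = G.edgeSet) (hinj : Function.Injective (f ∘ φ))
    (hb : ∀ e, 1 ≤ f (φ e) ∧ f (φ e) ≤ Fintype.card E) :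
    Set.BijOn f G.edgeSet (Set.Icc 1 G.edgeSet.ncard) := by
  have hφi : Function.Injective φ := hinj.of_comp
  have hn : G.edgeSet.ncard = Fintype.card E := by
    rw [← hφ, ← Set.image_univ, Set.ncard_image_of_injective _ hφi, Set.ncard_univ,
      Nat.card_eq_fintype_card]
  have hrange : Set.range (f ∘ φ) = Set.Icc 1 (Fintype.card E) := by
    apply Set.eq_of_subset_of_ncard_le
    · rintro _ ⟨e, rfl⟩
      exact hb e
    · rw [← Set.image_univ, Set.ncard_image_of_injective _ hinj, Set.ncard_univ,
        Nat.card_eq_fintype_card, ← Finset.coe_Icc, Set.ncard_coe_finset]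
      simp
    · exact Set.finite_Icc _ _
  rw [hn, ← hrange, ← hφ]
  refine ⟨?_, ?_, ?_⟩
  · rintro _ ⟨e, rfl⟩
    exact ⟨e, rfl⟩
  · rintro _ ⟨e, rfl⟩ _ ⟨e', rfl⟩ h
    rw [hinj h]
  · rintro _ ⟨e, rfl⟩
    exact ⟨φ e, ⟨e, rfl⟩, rfl⟩

/-- Symmetric labelling from a directed one. -/
def symLab {V : Type*} (g : V → V → ℕ) : Sym2 V → ℕ :=
  Sym2.lift ⟨fun u v => g u v + g v u, fun _ _ => Nat.add_comm _ _⟩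

lemma symLab_mk {V : Type*} (g : V → V → ℕ) (u v : V) : symLab g s(u, v) = g u v + g v u := rfl

abbrev starG (k : ℕ) : SimpleGraph (Fin 1 ⊕ Fin k) := completeBipartiteGraph (Fin 1) (Fin k)

lemma star_connected (k : ℕ) : (starG k).Connected := by
  have h : ∀ v, (starG k).Reachable (Sum.inl 0) v := by
    rintro (a | i)
    · rw [Subsingleton.elim a 0]
    · exact SimpleGraph.Adj.reachable (by simp)
  have : Nonempty (Fin 1 ⊕ Fin k) := ⟨Sum.inl 0⟩
  exact ⟨fun u v => (h u).symm.trans (h v)⟩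

lemma star_sum_leaf (k : ℕ) (f : Sym2 (Fin 1 ⊕ Fin k) → ℕ) (i : Fin k) :
    vertexSum (starG k) f (Sum.inr i) = f s(Sum.inl 0, Sum.inr i) := by
  classical
  rw [vertexSum_eq]
  simp [Fintype.sum_sum_type, Sym2.eq_swap]

lemma star_sum_center (k : ℕ) (f : Sym2 (Fin 1 ⊕ Fin k) → ℕ) :
    vertexSum (starG k) f (Sum.inl 0) = ∑ i, f s(Sum.inl 0, Sum.inr i) := by
  classical
  rw [vertexSum_eq]
  simp [Fintype.sum_sum_type]

lemma star_colorCount (k : ℕ) (f : Sym2 (Fin 1 ⊕ Fin k) → ℕ) (hf : IsLocalAntimagic (starG k) f) :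
    colorCount (starG k) f = k + 1 := by
  have hinj : Function.Injective (vertexSum (starG k) f) := by
    rintro (a | i) (b | j) h
    · rw [Subsingleton.elim a b]
    · exact (hf.2 _ _ (by simp) h).elim
    · exact (hf.2 _ _ (by simp) h).elim
    · rw [star_sum_leaf, star_sum_leaf] at h
      have := hf.1.injOn (by simp) (by simp) h
      simpa using this
  unfold colorCount
  rw [← Set.image_univ, Set.ncard_image_of_injective _ hinj, Set.ncard_univ,
    Nat.card_eq_fintype_card]
  simp [Nat.add_comm]

lemma chiLA_star (k : ℕ) (hk : 2 ≤ k) : chiLA (starG k) = k + 1 := by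
  apply chiLA_eq_of
  · let g : Fin 1 ⊕ Fin k → Fin 1 ⊕ Fin k → ℕ := fun u v =>
      match u, v with
      | Sum.inl _, Sum.inr i => i + 1
      | _, _ => 0
    have hv : ∀ i : Fin k, symLab g s(Sum.inl 0, Sum.inr i) = i + 1 := fun i => rfl
    have hf : IsLocalAntimagic (starG k) (symLab g) := by
      constructor
      · apply bijOn_of_param (E := Fin k) _ _ (fun i => s(Sum.inl 0, Sum.inr i))
        · ext e
          induction e using Sym2.ind with
          | _ x y =>
            rcases x with x | x <;> rcases y with y | y <;> simp [Subsingleton.elim _ (0 : Fin 1)]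
        · intro i j h
          simp only [Function.comp, hv] at h
          exact Fin.ext (by omega)
        · intro i
          rw [hv]
          have := i.2
          simp
      · have key : ∀ j : Fin k, vertexSum (starG k) (symLab g) (Sum.inr j) <
            vertexSum (starG k) (symLab g) (Sum.inl 0) := by
          intro j
          rw [star_sum_leaf, star_sum_center]
          have : Nontrivial (Fin k) := Fin.nontrivial_iff_two_le.mpr hk
          obtain ⟨j', hj'⟩ := exists_ne j
          apply Finset.single_lt_sum hj' (Finset.mem_univ _) (Finset.mem_univ _)
          · rw [hv]; omega
          · intros; exact Nat.zero_le _
        rintro (a | i) (b | j) h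
        · simp at h
        · rw [Subsingleton.elim a 0]; exact (key j).ne'
        · rw [Subsingleton.elim b 0]; exact (key i).ne
        · simp at h
    exact ⟨symLab g, hf, star_colorCount k _ hf⟩
  · intro f hf
    rw [star_colorCount k f hf]

/-- directed labelling of the join from an array -/
def gLab {k : ℕ} (x : Fin k → Fin 3 → ℕ) (p q : ℕ) :
    (Fin 1 ⊕ Fin k) ⊕ Fin 2 → (Fin 1 ⊕ Fin k) ⊕ Fin 2 → ℕ
  | Sum.inl (Sum.inl _), Sum.inl (Sum.inr i) => x i 2
  | Sum.inr 0, Sum.inl (Sum.inr i) => x i 0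
  | Sum.inr 1, Sum.inl (Sum.inr i) => x i 1
  | Sum.inr 0, Sum.inl (Sum.inl _) => p
  | Sum.inr 1, Sum.inl (Sum.inl _) => q
  | _, _ => 0

lemma join_star_lower (k : ℕ) (hk : 2 ≤ k) (f : Sym2 ((Fin 1 ⊕ Fin k) ⊕ Fin 2) → ℕ)
    (hf : IsLocalAntimagic (joinEmpty (starG k) 2) f) :
    3 ≤ colorCount (joinEmpty (starG k) 2) f := by
  obtain ⟨y⟩ : Nonempty (Fin k) := ⟨⟨0, by omega⟩⟩
  have e1 := hf.2 (Sum.inl (Sum.inl 0)) (Sum.inl (Sum.inr y)) (by simp [joinEmpty_adj_ll])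
  have e2 := hf.2 (Sum.inl (Sum.inl 0)) (Sum.inr 0) (joinEmpty_adj_lr _ _ _ _)
  have e3 := hf.2 (Sum.inl (Sum.inr y)) (Sum.inr 0) (joinEmpty_adj_lr _ _ _ _)
  have h3 := Set.ncard_eq_three.mpr ⟨_, _, _, e1, e2, e3, rfl⟩
  unfold colorCount
  rw [← h3]
  apply Set.ncard_le_ncard _ (Set.finite_range _)
  rintro n (rfl | rfl | rfl) <;> exact ⟨_, rfl⟩

/-- parametrisation of the edges of the join -/
def edgePar (k : ℕ) : (Fin k × Fin 3) ⊕ Fin 2 → Sym2 ((Fin 1 ⊕ Fin k) ⊕ Fin 2) := Sum.elim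
  (fun z => s(![Sum.inr 0, Sum.inr 1, Sum.inl (Sum.inl 0)] z.2, Sum.inl (Sum.inr z.1)))
  (fun r => s(Sum.inr r, Sum.inl (Sum.inl 0)))

lemma chiLA_join_star (k : ℕ) (hk : 2 ≤ k) : chiLA (joinEmpty (starG k) 2) = 3 := by
  classical
  apply chiLA_eq_of
  · obtain ⟨x, p, q, T, U, W, hinj, hb, hpq, hp1, hp2, hq1, hq2, hT, hU, hU', hW, hTU, hTW, hUW⟩ :=
      goodArr_all k hk
    obtain ⟨g, hg⟩ : ∃ g, g = gLab x p q := ⟨_, rfl⟩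
    have hc : vertexSum (joinEmpty (starG k) 2) (symLab g) (Sum.inl (Sum.inl 0)) = W := by
      rw [vertexSum_eq, ← hW]
      simp [Fintype.sum_sum_type, joinEmpty_adj_ll, joinEmpty_adj_lr, symLab_mk, hg, gLab, Nat.add_assoc]
    have hl : ∀ i, vertexSum (joinEmpty (starG k) 2) (symLab g) (Sum.inl (Sum.inr i)) = T := by
      intro i
      rw [vertexSum_eq, ← hT i]
      simp [Fintype.sum_sum_type, joinEmpty_adj_ll, joinEmpty_adj_lr, symLab_mk, hg, gLab]
      omega
    have ha : ∀ r, vertexSum (joinEmpty (starG k) 2) (symLab g) (Sum.inr r) = U := by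
      intro r
      rw [vertexSum_eq]
      fin_cases r
      · rw [← hU]
        simp [Fintype.sum_sum_type, joinEmpty_adj_rl, joinEmpty_adj_rr, symLab_mk, hg, gLab, Nat.add_comm]
      · rw [← hU']
        simp [Fintype.sum_sum_type, joinEmpty_adj_rl, joinEmpty_adj_rr, symLab_mk, hg, gLab, Nat.add_comm]
    refine ⟨symLab g, ⟨?_, ?_⟩, ?_⟩
    · obtain ⟨φ, hφ⟩ : ∃ φ, φ = edgePar k := ⟨_, rfl⟩
      have h1 : ∀ i r, symLab g (φ (Sum.inl (i, r))) = x i r := by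
        intro i r
        fin_cases r <;> simp [hφ, edgePar, symLab_mk, hg, gLab]
      have h2 : symLab g (φ (Sum.inr 0)) = p := by simp [hφ, edgePar, symLab_mk, hg, gLab]
      have h3 : symLab g (φ (Sum.inr 1)) = q := by simp [hφ, edgePar, symLab_mk, hg, gLab]
      have hcard : Fintype.card ((Fin k × Fin 3) ⊕ Fin 2) = 3 * k + 2 := by
        simp [Nat.mul_comm]
      apply bijOn_of_param _ _ φ
      · ext e
        constructor
        · rintro ⟨⟨i, r⟩ | r, rfl⟩
          · fin_cases r <;> simp [hφ, edgePar, joinEmpty_adj_ll, joinEmpty_adj_rl]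
          · simp [hφ, edgePar, joinEmpty_adj_rl]
        · have hA : ∀ i r, ∃ z, φ z = s(Sum.inr r, Sum.inl (Sum.inr i)) := by
            intro i r
            fin_cases r
            · exact ⟨Sum.inl (i, 0), by rw [hφ]; rfl⟩
            · exact ⟨Sum.inl (i, 1), by rw [hφ]; rfl⟩
          have hB : ∀ i, ∃ z, φ z = s(Sum.inl (Sum.inl 0), Sum.inl (Sum.inr i)) :=
            fun i => ⟨Sum.inl (i, 2), by rw [hφ]; rfl⟩
          have hC : ∀ r, ∃ z, φ z = s(Sum.inr r, Sum.inl (Sum.inl 0)) :=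
            fun r => ⟨Sum.inr r, by rw [hφ]; rfl⟩
          induction e using Sym2.ind with
          | _ u v =>
            intro h
            rw [SimpleGraph.mem_edgeSet] at h
            rcases u with (a | i) | r <;> rcases v with (b | j) | r'
            · simp [joinEmpty_adj_ll] at h
            · rw [Subsingleton.elim a 0]; exact hB j
            · rw [Subsingleton.elim a 0, Sym2.eq_swap]; exact hC r'
            · rw [Subsingleton.elim b 0, Sym2.eq_swap]; exact hB i
            · simp [joinEmpty_adj_ll] at h
            · rw [Sym2.eq_swap]; exact hA i r'
            · rw [Subsingleton.elim b 0]; exact hC r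
            · exact hA j r
            · exact (joinEmpty_adj_rr _ _ _ _ h).elim
      · have h4 : ∀ i r s, x i r ≠ symLab g (φ (Sum.inr s)) := by
          intro i r
          rw [Fin.forall_fin_two, h2, h3]
          exact (hb i r).2.2
        have h5 : ∀ s s', symLab g (φ (Sum.inr s)) = symLab g (φ (Sum.inr s')) → s = s' := by
          simp [Fin.forall_fin_two, h2, h3, hpq, hpq.symm]
        rintro (⟨i, r⟩ | s) (⟨i', r'⟩ | s') h
        · simp only [Function.comp, h1] at h
          obtain ⟨rfl, rfl⟩ := hinj _ _ _ _ h
          rfl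
        · simp only [Function.comp, h1] at h
          exact (h4 _ _ _ h).elim
        · simp only [Function.comp, h1] at h
          exact (h4 _ _ _ h.symm).elim
        · simp only [Function.comp] at h
          rw [h5 _ _ h]
      · rw [hcard]
        rintro (⟨i, r⟩ | s)
        · rw [h1]; exact ⟨(hb i r).1, (hb i r).2.1⟩
        · revert s
          rw [Fin.forall_fin_two, h2, h3]
          exact ⟨⟨hp1, hp2⟩, ⟨hq1, hq2⟩⟩
    · rintro ((a | i) | r) ((b | j) | r') h
      · simp [joinEmpty_adj_ll] at h
      · rw [Subsingleton.elim a 0, hc, hl]; exact hTW.symm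
      · rw [Subsingleton.elim a 0, hc, ha]; exact hUW.symm
      · rw [Subsingleton.elim b 0, hc, hl]; exact hTW
      · simp [joinEmpty_adj_ll] at h
      · rw [hl, ha]; exact hTU
      · rw [Subsingleton.elim b 0, hc, ha]; exact hUW
      · rw [hl, ha]; exact hTU.symm
      · exact (joinEmpty_adj_rr _ _ _ _ h).elim
    · have : Set.range (vertexSum (joinEmpty (starG k) 2) (symLab g)) = {T, U, W} := by
        ext n
        constructor
        · rintro ⟨(a | i) | r, rfl⟩
          · rw [Subsingleton.elim a 0, hc]; simp
          · rw [hl]; simp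
          · rw [ha]; simp
        · rintro (h | h | h)
          · exact ⟨_, (hl ⟨0, by omega⟩).trans h.symm⟩
          · exact ⟨_, (ha 0).trans h.symm⟩
          · exact ⟨_, hc.trans (Set.mem_singleton_iff.mp h).symm⟩
      unfold colorCount
      rw [this, Set.ncard_eq_three]
      exact ⟨T, U, W, hTU, hTW, hUW, rfl⟩
  · exact fun f hf => join_star_lower k hk f hf

theorem counterexample_join_O2 (m : ℕ) (hm : 3 ≤ m) :
    chiLA (completeBipartiteGraph (Fin 1) (Fin (m - 1))) = m ∧
    chiLA (joinEmpty (completeBipartiteGraph (Fin 1) (Fin (m - 1))) 2) = 3 ∧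
    ∃ (G : SimpleGraph (Fin m)), G.Connected ∧ chiLA G = m ∧ chiLA (joinEmpty G 2) = 3 := by
  have h1 : chiLA (starG (m - 1)) = m := by
    rw [chiLA_star (m - 1) (by omega)]; omega
  have h2 := chiLA_join_star (m - 1) (by omega)
  refine ⟨h1, h2, ?_⟩
  let e : Fin m ≃ Fin 1 ⊕ Fin (m - 1) :=
    (finCongr (by omega : m = 1 + (m - 1))).trans finSumFinEquiv.symm
  let φ : (starG (m - 1)).comap e ≃g starG (m - 1) := SimpleGraph.Iso.comap e _
  refine ⟨(starG (m - 1)).comap e, ?_, ?_, ?_⟩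
  · exact φ.connected_iff.mpr (star_connected _)
  · rw [chiLA_iso φ, h1]
  · rw [chiLA_iso (joinIso φ 2), h2]
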